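/- For an N×N Hermitian matrix D with eigenvalues λ_1, ..., λ_N (orthonormal eigenbasis) and Hermitian A with entries A_{ij}, and f smooth, the second Gâteaux derivative of S(A) = Tr f(D+A) at 0 is S''(0)(A,A) = 2 ∑_{i,j} A_{ij} A_{ji} f[λ_j, λ_i, λ_j] = ∑_{i,j} |A_{ij}|² · f'[λ_i, λ_j], where f'[λ_i, λ_j] is the divided difference of f' ((f'(λ_i) − f'(λ_j))/(λ_i − λ_j), or f''(λ_i) when λ_i = λ_j). -/

import Mathlib

open Matrix MeasureTheory

/-- `Tr f(M)` for a Hermitian matrix `M`: the sum of `f` over the eigenvalues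
of `M` (defined via the spectral theorem; junk value `0` otherwise). -/
noncomputable def trFun {N : Type*} [Fintype N] [DecidableEq N]
    (f : ℝ → ℝ) (M : Matrix N N ℂ) : ℝ :=
  if h : M.IsHermitian then ∑ i, f (h.eigenvalues i) else 0

/-- The divided difference `f[x₀,…,xₙ]`, defined for `Cⁿ` functions (and
arbitrary, possibly coinciding, points) via Hermite's integral representation
`f[x₀,…,xₙ] = ∫_{Δₙ} f⁽ⁿ⁾(s₀x₀ + ⋯ + sₙxₙ) dⁿs`; it agrees with the usual
recursive definition on distinct points and extends it continuously. -/
noncomputable def divDiff {E : Type*} [NormedAddCommGroup E] [NormedSpace ℝ E]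
    (f : ℝ → E) (n : ℕ) (x : Fin (n + 1) → ℝ) : E :=
  ∫ s in {s : Fin n → ℝ | (∀ i, 0 ≤ s i) ∧ ∑ i, s i ≤ 1},
    iteratedDeriv n f ((1 - ∑ i, s i) * x 0 + ∑ i : Fin n, s i * x i.succ)


/-- Hermite form of the first divided difference. -/
noncomputable def hDD (φ : ℝ → ℝ) (x y : ℝ) : ℝ := ∫ t in (0:ℝ)..1, deriv φ (y + t * (x - y))

lemma hDD_self (φ : ℝ → ℝ) (y : ℝ) : hDD φ y y = deriv φ y := by simp [hDD]

lemma hDD_mul {φ : ℝ → ℝ} (hφ : ContDiff ℝ 1 φ) (x y : ℝ) :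
    hDD φ x y * (x - y) = φ x - φ y := by
  unfold hDD
  have hc : Continuous (deriv φ) := hφ.continuous_deriv le_rfl
  rw [← intervalIntegral.integral_mul_const]
  rw [intervalIntegral.integral_eq_sub_of_hasDerivAt (f := fun t => φ (y + t * (x - y)))]
  · simp
  · intro t _
    have h1 : HasDerivAt (fun t : ℝ => y + t * (x - y)) (x - y) t := by
      simpa using ((hasDerivAt_id t).mul_const (x - y)).const_add y
    have h2 : HasDerivAt φ (deriv φ (y + t * (x - y))) (y + t * (x - y)) :=
      (hφ.differentiable (by simp) _).hasDerivAt
    exact h2.comp t h1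
  · exact Continuous.intervalIntegrable (by fun_prop) _ _

lemma hDD_lip {φ : ℝ → ℝ} (hφ : ContDiff ℝ 2 φ) (R : ℝ) :
    ∃ C, 0 ≤ C ∧ ∀ x y z, |x| ≤ R → |y| ≤ R → |z| ≤ R → |hDD φ x z - hDD φ y z| ≤ C * |x - y| := by
  have hd : ContDiff ℝ 1 (deriv φ) := by
    have : ContDiff ℝ (1 + 1) φ := by simpa [one_add_one_eq_two] using hφ
    exact (contDiff_succ_iff_deriv.1 this).2.2
  have hc : Continuous (deriv φ) := hd.continuous
  obtain ⟨C, hC⟩ := (isCompact_Icc (a := -R) (b := R)).exists_bound_of_continuousOn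
    (hd.continuous_deriv le_rfl).continuousOn
  refine ⟨|C|, abs_nonneg _, fun x y z hx hy hz => ?_⟩
  have key : ∀ a ∈ Set.Icc (-R) R, ∀ b ∈ Set.Icc (-R) R,
      |deriv φ a - deriv φ b| ≤ |C| * |a - b| := by
    intro a ha b hb
    exact (convex_Icc (-R) R).norm_image_sub_le_of_norm_deriv_le
      (fun s _ => hd.differentiable (by simp) s) (fun s hs => (hC s hs).trans (le_abs_self C)) hb ha
  have hin : ∀ x : ℝ, |x| ≤ R → ∀ t ∈ Set.Icc (0:ℝ) 1, z + t * (x - z) ∈ Set.Icc (-R) R := by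
    intro x hx t ht
    have h := (convex_Icc (-R) R) (abs_le.1 hz) (abs_le.1 hx) (sub_nonneg.2 ht.2) ht.1 (by ring)
    have e : z + t * (x - z) = (1 - t) • z + t • x := by simp; ring
    rw [e]; exact h
  unfold hDD
  rw [← intervalIntegral.integral_sub (Continuous.intervalIntegrable (by fun_prop) _ _)
    (Continuous.intervalIntegrable (by fun_prop) _ _)]
  have := intervalIntegral.norm_integral_le_of_norm_le_const (a := (0:ℝ)) (b := 1)
    (C := |C| * |x - y|)
    (f := fun t => deriv φ (z + t * (x - z)) - deriv φ (z + t * (y - z))) (by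
      intro t ht
      rw [Set.uIoc_of_le zero_le_one] at ht
      have ht' : t ∈ Set.Icc (0:ℝ) 1 := ⟨ht.1.le, ht.2⟩
      refine (key _ (hin x hx t ht') _ (hin y hy t ht')).trans ?_
      have e : z + t * (x - z) - (z + t * (y - z)) = t * (x - y) := by ring
      rw [e, abs_mul, abs_of_nonneg ht'.1]
      have := mul_le_of_le_one_left (abs_nonneg (x - y)) ht'.2
      gcongr)
  simpa using this

lemma divDiff_two (φ : ℝ → ℝ) (hφ : ContDiff ℝ 2 φ) (a b : ℝ) :
    divDiff φ 2 ![b, a, b] =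
      ∫ t in (0:ℝ)..1, (1 - t) * iteratedDeriv 2 φ (b + t * (a - b)) := by
  have hc : Continuous (iteratedDeriv 2 φ) := hφ.continuous_iteratedDeriv 2 le_rfl
  set G : ℝ → ℝ := fun t => iteratedDeriv 2 φ (b + t * (a - b)) with hG
  have hGc : Continuous G := by fun_prop
  set K : Set (ℝ × ℝ) := {p | 0 ≤ p.1 ∧ 0 ≤ p.2 ∧ p.1 + p.2 ≤ 1} with hK
  have hKc : IsClosed K :=
    (isClosed_le continuous_const continuous_fst).inter
      ((isClosed_le continuous_const continuous_snd).inter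
        (isClosed_le (continuous_fst.add continuous_snd) continuous_const))
  have hKk : IsCompact K := by
    refine (isCompact_Icc (a := ((0:ℝ),(0:ℝ))) (b := ((1:ℝ),(1:ℝ)))).of_isClosed_subset hKc ?_
    rintro ⟨p, q⟩ ⟨h1, h2, h3⟩
    simp only at h1 h2 h3
    exact ⟨⟨h1, h2⟩, ⟨by simp only; linarith, by simp only; linarith⟩⟩
  have e1 : divDiff φ 2 ![b, a, b] = ∫ p in K, G p.1 := by
    have mp := volume_preserving_finTwoArrow ℝ
    rw [← mp.setIntegral_preimage_emb (MeasurableEquiv.finTwoArrow.measurableEmbedding)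
      (fun p => G p.1) K]
    unfold divDiff
    congr 1
    · congr 1
      ext s
      simp [hK, Fin.forall_fin_two, and_assoc]
    · ext s
      simp only [hG, Fin.sum_univ_two]
      congr 1
      simp
      ring
  rw [e1, ← integral_indicator hKc.measurableSet, Measure.volume_eq_prod, integral_prod]
  · have e2 : ∀ x : ℝ, (∫ y, K.indicator (fun p : ℝ × ℝ => G p.1) (x, y)) =
        (Set.Icc (0:ℝ) 1).indicator (fun t => (1 - t) * G t) x := by
      intro x
      by_cases hx : x ∈ Set.Icc (0:ℝ) 1
      · have : ∀ y, K.indicator (fun p : ℝ × ℝ => G p.1) (x, y) =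
            (Set.Icc (0:ℝ) (1 - x)).indicator (fun _ => G x) y := by
          intro y
          by_cases hy : y ∈ Set.Icc (0:ℝ) (1 - x)
          · rw [Set.indicator_of_mem hy, Set.indicator_of_mem]
            exact ⟨hx.1, hy.1, by simp only; linarith [hy.2]⟩
          · rw [Set.indicator_of_notMem hy, Set.indicator_of_notMem]
            rintro ⟨_, h2, h3⟩
            simp only at h2 h3
            exact hy ⟨h2, by linarith⟩
        simp_rw [this]
        rw [integral_indicator measurableSet_Icc, Set.indicator_of_mem hx]
        simp [hx.2]
      · rw [Set.indicator_of_notMem hx]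
        have : ∀ y, K.indicator (fun p : ℝ × ℝ => G p.1) (x, y) = 0 := by
          intro y
          rw [Set.indicator_of_notMem]
          rintro ⟨h1, h2, h3⟩
          simp only at h1 h2 h3
          exact hx ⟨h1, by linarith⟩
        simp [this]
    simp_rw [e2]
    rw [integral_indicator measurableSet_Icc, integral_Icc_eq_integral_Ioc,
      intervalIntegral.integral_of_le zero_le_one]
  · rw [← Measure.volume_eq_prod, integrable_indicator_iff hKc.measurableSet]
    exact ContinuousOn.integrableOn_compact hKk (by fun_prop)

lemma divDiff_add (φ : ℝ → ℝ) (hφ : ContDiff ℝ 2 φ) (a b : ℝ) :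
    divDiff φ 2 ![b, a, b] + divDiff φ 2 ![a, b, a] = hDD (deriv φ) a b := by
  have hc : Continuous (iteratedDeriv 2 φ) := hφ.continuous_iteratedDeriv 2 le_rfl
  rw [divDiff_two φ hφ a b, divDiff_two φ hφ b a]
  have : (∫ t in (0:ℝ)..1, (1 - t) * iteratedDeriv 2 φ (a + t * (b - a))) =
      ∫ t in (0:ℝ)..1, t * iteratedDeriv 2 φ (b + t * (a - b)) := by
    have := intervalIntegral.integral_comp_sub_left (a := (0:ℝ)) (b := 1)
      (fun t => t * iteratedDeriv 2 φ (b + t * (a - b))) 1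
    simp only [sub_self, sub_zero] at this
    rw [← this]
    congr 1; ext t; congr 2; ring
  rw [this, ← intervalIntegral.integral_add (Continuous.intervalIntegrable (by fun_prop) _ _)
    (Continuous.intervalIntegrable (by fun_prop) _ _)]
  unfold hDD
  congr 1; ext t
  rw [show deriv (deriv φ) = iteratedDeriv 2 φ by rw [iteratedDeriv_succ, iteratedDeriv_one]]
  ring

section pert
variable {N E : Type*} [Fintype N] [NormedAddCommGroup E] [InnerProductSpace ℂ E]

lemma pert_rel (v w : OrthonormalBasis N ℂ E) (P Q A : E →L[ℂ] E) (l m : N → ℝ) (u : ℝ)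
    (hP : ∀ x y, inner ℂ (P x) y = inner ℂ x (P y))
    (hv : ∀ i, P (v i) = (l i : ℂ) • v i) (hw : ∀ i, Q (w i) = (m i : ℂ) • w i)
    (hPQ : P = Q + (u : ℂ) • A) (i j : N) :
    ((l i - m j : ℝ) : ℂ) * inner ℂ (v i) (w j) = u * inner ℂ (v i) (A (w j)) := by
  have h1 := hP (v i) (w j)
  rw [hv, inner_smul_left] at h1
  rw [hPQ] at h1
  simp only [_root_.add_apply, _root_.smul_apply, hw, inner_add_right,
    inner_smul_right, Complex.conj_ofReal] at h1
  push_cast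
  linear_combination h1

lemma coef_le (v w : OrthonormalBasis N ℂ E) (A : E →L[ℂ] E) (i j : N) :
    ‖inner ℂ (v i) (A (w j))‖ ≤ ‖A‖ := by
  refine (norm_inner_le_norm _ _).trans ?_
  have := A.le_opNorm (w j)
  simpa using this

lemma pert_abs (v w : OrthonormalBasis N ℂ E) (P Q A : E →L[ℂ] E) (l m : N → ℝ) (u : ℝ)
    (hP : ∀ x y, inner ℂ (P x) y = inner ℂ x (P y))
    (hv : ∀ i, P (v i) = (l i : ℂ) • v i) (hw : ∀ i, Q (w i) = (m i : ℂ) • w i)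
    (hPQ : P = Q + (u : ℂ) • A) (i j : N) :
    |l i - m j| * ‖inner ℂ (v i) (w j)‖ ≤ |u| * ‖A‖ := by
  have h := congrArg norm (pert_rel v w P Q A l m u hP hv hw hPQ i j)
  rw [norm_mul, norm_mul, Complex.norm_real, Complex.norm_real] at h
  simp only [Real.norm_eq_abs] at h
  rw [h]
  gcongr
  exact coef_le v w A i j

lemma sum_sq (v : OrthonormalBasis N ℂ E) (x : E) :
    ∑ i, ‖inner ℂ (v i) x‖ ^ 2 = ‖x‖ ^ 2 := v.sum_sq_norm_inner_right x

/-- first order estimate -/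
lemma first_order (v w : OrthonormalBasis N ℂ E) (P Q A : E →L[ℂ] E) (l m : N → ℝ) (u : ℝ)
    (hP : ∀ x y, inner ℂ (P x) y = inner ℂ x (P y))
    (hv : ∀ i, P (v i) = (l i : ℂ) • v i) (hw : ∀ i, Q (w i) = (m i : ℂ) • w i)
    (hPQ : P = Q + (u : ℂ) • A) (f : ℝ → ℝ) (g : ℝ → ℝ) (C : ℝ)
    (hC0 : 0 ≤ C)
    (hC : ∀ i j, |f (l i) - f (m j) - g (m j) * (l i - m j)| ≤ C * (l i - m j) ^ 2) :
    |∑ i, f (l i) - ∑ j, f (m j) - u * ∑ j, g (m j) * (inner ℂ (w j) (A (w j))).re| ≤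
      (∑ _i : N, ∑ _j : N, C * ‖A‖ ^ 2) * u ^ 2 := by
  have s1 : ∑ i, f (l i) = ∑ i, ∑ j, f (l i) * ‖inner ℂ (v i) (w j)‖ ^ 2 := by
    refine Finset.sum_congr rfl fun i _ => ?_
    rw [← Finset.mul_sum]
    simp_rw [norm_inner_symm (v i)]
    rw [sum_sq]; simp
  have s2 : ∑ j, f (m j) = ∑ i, ∑ j, f (m j) * ‖inner ℂ (v i) (w j)‖ ^ 2 := by
    rw [Finset.sum_comm]
    refine Finset.sum_congr rfl fun i _ => ?_
    rw [← Finset.mul_sum, sum_sq]; simp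
  have s3 : u * ∑ j, g (m j) * (inner ℂ (w j) (A (w j))).re =
      ∑ i, ∑ j, g (m j) * (l i - m j) * ‖inner ℂ (v i) (w j)‖ ^ 2 := by
    rw [Finset.sum_comm, Finset.mul_sum]
    refine Finset.sum_congr rfl fun j _ => ?_
    simp_rw [mul_assoc]
    rw [← Finset.mul_sum]
    rw [mul_left_comm]
    congr 1
    rw [← v.sum_inner_mul_inner, Complex.re_sum, Finset.mul_sum]
    refine Finset.sum_congr rfl fun i _ => ?_
    have h := pert_rel v w P Q A l m u hP hv hw hPQ i j
    rw [← Complex.re_ofReal_mul, mul_left_comm, ← h, mul_left_comm, Complex.re_ofReal_mul]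
    congr 1
    rw [← inner_conj_symm, Complex.conj_mul', ← Complex.ofReal_pow, Complex.ofReal_re]
  rw [s1, s2, s3]
  simp only [← Finset.sum_sub_distrib]
  rw [Finset.sum_mul]
  refine (Finset.abs_sum_le_sum_abs _ _).trans (Finset.sum_le_sum fun i _ => ?_)
  rw [Finset.sum_mul]
  refine (Finset.abs_sum_le_sum_abs _ _).trans (Finset.sum_le_sum fun j _ => ?_)
  rw [← sub_mul, ← sub_mul, abs_mul, abs_of_nonneg (sq_nonneg ‖_‖)]
  have h := pert_abs v w P Q A l m u hP hv hw hPQ i j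
  calc _ ≤ C * (l i - m j) ^ 2 * ‖inner ℂ (v i) (w j)‖ ^ 2 := by gcongr; exact hC i j
    _ = C * (|l i - m j| * ‖inner ℂ (v i) (w j)‖) ^ 2 := by rw [mul_pow, sq_abs]; ring
    _ ≤ C * (|u| * ‖A‖) ^ 2 := by gcongr
    _ = _ := by rw [mul_pow, sq_abs]; ring

/-- continuity estimate -/
lemma cont_est (v w : OrthonormalBasis N ℂ E) (P Q A : E →L[ℂ] E) (l m : N → ℝ) (u : ℝ)
    (hP : ∀ x y, inner ℂ (P x) y = inner ℂ x (P y))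
    (hv : ∀ i, P (v i) = (l i : ℂ) • v i) (hw : ∀ i, Q (w i) = (m i : ℂ) • w i)
    (hPQ : P = Q + (u : ℂ) • A) (h : ℝ → ℝ) (C : ℝ) (hC0 : 0 ≤ C)
    (hC : ∀ i j, |h (l i) - h (m j)| ≤ C * |l i - m j|) (b : E) :
    |∑ i, h (l i) * ‖inner ℂ (v i) b‖ ^ 2 - ∑ k, h (m k) * ‖inner ℂ (w k) b‖ ^ 2| ≤
      (∑ _i : N, ∑ _k : N, C * ‖A‖ * ‖b‖ ^ 2) * |u| := by
  have t1 : ∀ i, ‖inner ℂ (v i) b‖ ^ 2 =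
      ∑ k, (inner ℂ b (v i) * (inner ℂ (v i) (w k) * inner ℂ (w k) b)).re := by
    intro i
    rw [← Complex.re_sum, ← Finset.mul_sum, w.sum_inner_mul_inner, ← inner_conj_symm b,
      Complex.conj_mul', ← Complex.ofReal_pow, Complex.ofReal_re]
  have t2 : ∀ k, ‖inner ℂ (w k) b‖ ^ 2 =
      ∑ i, (inner ℂ b (v i) * (inner ℂ (v i) (w k) * inner ℂ (w k) b)).re := by
    intro k
    simp_rw [← mul_assoc]
    rw [← Complex.re_sum, ← Finset.sum_mul, v.sum_inner_mul_inner, ← inner_conj_symm b,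
      Complex.conj_mul', ← Complex.ofReal_pow, Complex.ofReal_re]
  have s2 : ∑ k, h (m k) * ‖inner ℂ (w k) b‖ ^ 2 = ∑ i, ∑ k,
      h (m k) * (inner ℂ b (v i) * (inner ℂ (v i) (w k) * inner ℂ (w k) b)).re := by
    rw [Finset.sum_comm]
    refine Finset.sum_congr rfl fun k _ => ?_
    rw [t2, Finset.mul_sum]
  rw [s2]
  simp_rw [t1, Finset.mul_sum]
  simp only [← Finset.sum_sub_distrib]
  rw [Finset.sum_mul]
  refine (Finset.abs_sum_le_sum_abs _ _).trans (Finset.sum_le_sum fun i _ => ?_)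
  rw [Finset.sum_mul]
  refine (Finset.abs_sum_le_sum_abs _ _).trans (Finset.sum_le_sum fun k _ => ?_)
  rw [← sub_mul, abs_mul]
  have hh := pert_abs v w P Q A l m u hP hv hw hPQ i k
  have b1 : ‖inner ℂ b (v i)‖ ≤ ‖b‖ := by simpa using norm_inner_le_norm (𝕜 := ℂ) b (v i)
  have b2 : ‖inner ℂ (w k) b‖ ≤ ‖b‖ := by simpa using norm_inner_le_norm (𝕜 := ℂ) (w k) b
  calc _ ≤ (C * |l i - m k|) *
        ‖inner ℂ b (v i) * (inner ℂ (v i) (w k) * inner ℂ (w k) b)‖ := by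
        gcongr
        · exact hC i k
        · exact Complex.abs_re_le_norm _
    _ = C * (|l i - m k| * ‖inner ℂ (v i) (w k)‖) * (‖inner ℂ b (v i)‖ * ‖inner ℂ (w k) b‖) := by
        rw [norm_mul, norm_mul]; ring
    _ ≤ C * (|u| * ‖A‖) * (‖b‖ * ‖b‖) := by gcongr
    _ = _ := by ring

/-- second order identity -/
lemma second_order (v w : OrthonormalBasis N ℂ E) (P Q A : E →L[ℂ] E) (l m : N → ℝ) (u : ℝ)
    (hP : ∀ x y, inner ℂ (P x) y = inner ℂ x (P y))
    (hA : ∀ x y, inner ℂ (A x) y = inner ℂ x (A y))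
    (hv : ∀ i, P (v i) = (l i : ℂ) • v i) (hw : ∀ i, Q (w i) = (m i : ℂ) • w i)
    (hPQ : P = Q + (u : ℂ) • A) (g : ℝ → ℝ) (H : ℝ → ℝ → ℝ)
    (hH : ∀ x y, H x y * (x - y) = g x - g y) :
    ∑ i, g (l i) * (inner ℂ (v i) (A (v i))).re - ∑ j, g (m j) * (inner ℂ (w j) (A (w j))).re =
      u * ∑ j, ∑ i, H (l i) (m j) * ‖inner ℂ (v i) (A (w j))‖ ^ 2 := by
  have t1 : ∀ i, (inner ℂ (v i) (A (v i))).re =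
      ∑ j, (inner ℂ (w j) (v i) * inner ℂ (v i) (A (w j))).re := by
    intro i
    simp_rw [mul_comm (inner ℂ (w _) (v i)), ← hA]
    rw [← Complex.re_sum, w.sum_inner_mul_inner]
  have t2 : ∀ j, (inner ℂ (w j) (A (w j))).re =
      ∑ i, (inner ℂ (w j) (v i) * inner ℂ (v i) (A (w j))).re := by
    intro j
    rw [← Complex.re_sum, v.sum_inner_mul_inner]
  simp_rw [t1, t2, Finset.mul_sum]
  rw [Finset.sum_comm, ← Finset.sum_sub_distrib]
  refine Finset.sum_congr rfl fun j _ => ?_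
  rw [← Finset.sum_sub_distrib]
  refine Finset.sum_congr rfl fun i _ => ?_
  rw [← sub_mul, ← hH, mul_assoc, mul_left_comm u]
  congr 1
  have h := pert_rel v w P Q A l m u hP hv hw hPQ i j
  rw [← Complex.re_ofReal_mul, ← mul_assoc]
  have h' := congrArg (starRingEnd ℂ) h
  simp only [map_mul, Complex.conj_ofReal, inner_conj_symm] at h'
  rw [h', ← inner_conj_symm, mul_assoc, inner_conj_symm, ← inner_conj_symm (A (w j)),
    Complex.conj_mul', Complex.re_ofReal_mul, ← Complex.ofReal_pow, Complex.ofReal_re]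

end pert

lemma herm_symm {N : Type*} [Fintype N] [DecidableEq N] {M : Matrix N N ℂ} (hM : M.IsHermitian)
    (x y : EuclideanSpace ℂ N) :
    inner ℂ (Matrix.toEuclideanCLM (𝕜 := ℂ) M x) y =
      inner ℂ x (Matrix.toEuclideanCLM (𝕜 := ℂ) M y) :=
  (isSymmetric_toEuclideanLin_iff.mpr hM) x y

lemma herm_eig {N : Type*} [Fintype N] [DecidableEq N] {M : Matrix N N ℂ} (hM : M.IsHermitian)
    (i : N) :
    Matrix.toEuclideanCLM (𝕜 := ℂ) M (hM.eigenvectorBasis i) =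
      (hM.eigenvalues i : ℂ) • hM.eigenvectorBasis i := by
  have h := hM.mulVec_eigenvectorBasis i
  apply (WithLp.ofLp_injective 2)
  rw [Matrix.ofLp_toEuclideanCLM, h]
  ext k
  simp

lemma herm_le {N : Type*} [Fintype N] [DecidableEq N] {M : Matrix N N ℂ} (hM : M.IsHermitian)
    (i : N) : |hM.eigenvalues i| ≤ ‖Matrix.toEuclideanCLM (n := N) (𝕜 := ℂ) M‖ := by
  have h := (Matrix.toEuclideanCLM (n := N) (𝕜 := ℂ) M).le_opNorm (hM.eigenvectorBasis i)
  rw [herm_eig, norm_smul] at h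
  simpa using h

lemma herm_add {N : Type*} {D A : Matrix N N ℂ} (hD : D.IsHermitian) (hA : A.IsHermitian)
    (u : ℝ) : (D + (u : ℂ) • A).IsHermitian := by
  refine hD.add ?_
  rw [IsHermitian, conjTranspose_smul, hA.eq]
  simp

lemma clm_add {N : Type*} [Fintype N] [DecidableEq N] (D A : Matrix N N ℂ) (u v : ℝ) :
    Matrix.toEuclideanCLM (n := N) (𝕜 := ℂ) (D + (u : ℂ) • A) =
      Matrix.toEuclideanCLM (n := N) (𝕜 := ℂ) (D + (v : ℂ) • A) +
        ((u - v : ℝ) : ℂ) • Matrix.toEuclideanCLM (n := N) (𝕜 := ℂ) A := by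
  simp only [map_add, map_smul]
  push_cast
  module

lemma eig_bound {N : Type*} [Fintype N] [DecidableEq N] {D A : Matrix N N ℂ}
    (hD : D.IsHermitian) (hA : A.IsHermitian) (u v : ℝ) (h : |u - v| ≤ 1) (i : N) :
    |(herm_add hD hA u).eigenvalues i| ≤
      ‖Matrix.toEuclideanCLM (n := N) (𝕜 := ℂ) (D + (v : ℂ) • A)‖ +
        ‖Matrix.toEuclideanCLM (n := N) (𝕜 := ℂ) A‖ := by
  refine (herm_le _ i).trans ?_
  rw [clm_add D A u v]
  refine (norm_add_le _ _).trans ?_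
  rw [norm_smul, Complex.norm_real, Real.norm_eq_abs]
  gcongr
  exact mul_le_of_le_one_left (norm_nonneg _) h

/-- The first derivative of the spectral action. -/
lemma hasDerivAt_of_quad {S : ℝ → ℝ} {s v K : ℝ}
    (h : ∀ u, |u - v| ≤ 1 → |S u - S v - (u - v) * s| ≤ K * (u - v) ^ 2) : HasDerivAt S s v := by
  rw [hasDerivAt_iff_isLittleO]
  have h1 : (fun u => S u - S v - (u - v) • s) =O[nhds v] fun u => (u - v) ^ 2 := by
    refine Asymptotics.IsBigO.of_bound K ?_
    filter_upwards [Metric.closedBall_mem_nhds v one_pos] with u hu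
    have := h u (by simpa [Real.dist_eq] using hu)
    simpa using this
  refine h1.trans_isLittleO ?_
  have h2 : (fun x : ℝ => x ^ 2) =o[nhds 0] fun x => x := by
    simpa using Asymptotics.isLittleO_pow_id (𝕜 := ℝ) (n := 2) (by norm_num)
  have h3 : Filter.Tendsto (fun u => u - v) (nhds v) (nhds 0) := by
    have : Continuous fun u : ℝ => u - v := by fun_prop
    simpa using this.tendsto v
  exact h2.comp_tendsto h3

section main
variable {N : Type*} [Fintype N] [DecidableEq N] {D A : Matrix N N ℂ}

noncomputable def firstD (hD : D.IsHermitian) (hA : A.IsHermitian) (f : ℝ → ℝ) (v : ℝ) : ℝ :=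
  ∑ j, deriv f ((herm_add hD hA v).eigenvalues j) *
    (inner ℂ ((herm_add hD hA v).eigenvectorBasis j)
      (Matrix.toEuclideanCLM (𝕜 := ℂ) A ((herm_add hD hA v).eigenvectorBasis j))).re

lemma trFun_hasDerivAt (hD : D.IsHermitian) (hA : A.IsHermitian) (f : ℝ → ℝ)
    (hf : ContDiff ℝ 2 f) (v : ℝ) :
    HasDerivAt (fun u : ℝ => trFun f (D + (u : ℂ) • A)) (firstD hD hA f v) v := by
  have hS : (fun u : ℝ => trFun f (D + (u : ℂ) • A)) =
      fun u => ∑ i, f ((herm_add hD hA u).eigenvalues i) := by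
    ext u
    rw [trFun, dif_pos (herm_add hD hA u)]
  rw [hS]
  obtain ⟨C, hC0, hC⟩ := hDD_lip hf
    (‖Matrix.toEuclideanCLM (n := N) (𝕜 := ℂ) (D + (v : ℂ) • A)‖ +
        ‖Matrix.toEuclideanCLM (n := N) (𝕜 := ℂ) A‖)
  refine hasDerivAt_of_quad (fun u hu => first_order (herm_add hD hA u).eigenvectorBasis
    (herm_add hD hA v).eigenvectorBasis _ _ (Matrix.toEuclideanCLM (n := N) (𝕜 := ℂ) A)
    (herm_add hD hA u).eigenvalues (herm_add hD hA v).eigenvalues (u - v)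
    (herm_symm (herm_add hD hA u)) (herm_eig (herm_add hD hA u)) (herm_eig (herm_add hD hA v))
    (clm_add D A u v) f (deriv f) C hC0 ?_)
  intro i j
  have b1 := eig_bound hD hA u v hu i
  have b2 := eig_bound hD hA v v (by simp) j
  generalize (herm_add hD hA u).eigenvalues i = x at *
  generalize (herm_add hD hA v).eigenvalues j = y at *
  have := hC x y y b1 b2 b2
  rw [hDD_self] at this
  rw [← hDD_mul (hf.of_le (by norm_num)) x y, ← sub_mul, abs_mul]
  calc _ ≤ C * |x - y| * |x - y| := by gcongr
    _ = _ := by rw [mul_assoc, ← sq, sq_abs]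

lemma firstD_hasDerivAt (hD : D.IsHermitian) (hA : A.IsHermitian) (f : ℝ → ℝ)
    (hf : ContDiff ℝ 3 f) (v : ℝ) :
    HasDerivAt (firstD hD hA f)
      (∑ j, ∑ i, hDD (deriv f) ((herm_add hD hA v).eigenvalues i)
          ((herm_add hD hA v).eigenvalues j) *
        ‖inner ℂ ((herm_add hD hA v).eigenvectorBasis i)
          (Matrix.toEuclideanCLM (𝕜 := ℂ) A ((herm_add hD hA v).eigenvectorBasis j))‖ ^ 2) v := by
  have hg : ContDiff ℝ 2 (deriv f) := by
    have : ContDiff ℝ (2 + 1) f := by simpa [two_add_one_eq_three] using hf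
    exact (contDiff_succ_iff_deriv.1 this).2.2
  obtain ⟨C, hC0, hC⟩ := hDD_lip hg
    (‖Matrix.toEuclideanCLM (n := N) (𝕜 := ℂ) (D + (v : ℂ) • A)‖ +
        ‖Matrix.toEuclideanCLM (n := N) (𝕜 := ℂ) A‖)
  refine hasDerivAt_of_quad (K := ∑ j, ∑ _i : N, ∑ _k : N,
    C * ‖Matrix.toEuclideanCLM (n := N) (𝕜 := ℂ) A‖ *
      ‖Matrix.toEuclideanCLM (𝕜 := ℂ) A ((herm_add hD hA v).eigenvectorBasis j)‖ ^ 2)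
    (fun u hu => ?_)
  have h2 := second_order (herm_add hD hA u).eigenvectorBasis
    (herm_add hD hA v).eigenvectorBasis _ _ (Matrix.toEuclideanCLM (n := N) (𝕜 := ℂ) A)
    (herm_add hD hA u).eigenvalues (herm_add hD hA v).eigenvalues (u - v)
    (herm_symm (herm_add hD hA u)) (herm_symm hA)
    (herm_eig (herm_add hD hA u)) (herm_eig (herm_add hD hA v))
    (clm_add D A u v) (deriv f) (hDD (deriv f)) (hDD_mul (hg.of_le (by norm_num)))
  unfold firstD
  rw [h2, ← mul_sub, abs_mul, ← Finset.sum_sub_distrib, ← sq_abs (u - v), sq, ← mul_assoc,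
    mul_comm |u - v|]
  gcongr
  rw [Finset.sum_mul]
  refine (Finset.abs_sum_le_sum_abs _ _).trans (Finset.sum_le_sum fun j _ => ?_)
  refine cont_est (herm_add hD hA u).eigenvectorBasis
    (herm_add hD hA v).eigenvectorBasis _ _ (Matrix.toEuclideanCLM (n := N) (𝕜 := ℂ) A)
    (herm_add hD hA u).eigenvalues (herm_add hD hA v).eigenvalues (u - v)
    (herm_symm (herm_add hD hA u)) (herm_eig (herm_add hD hA u)) (herm_eig (herm_add hD hA v))
    (clm_add D A u v) (fun x => hDD (deriv f) x ((herm_add hD hA v).eigenvalues j)) C hC0 ?_ _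
  intro i k
  exact hC _ _ _ (eig_bound hD hA u v hu i) (eig_bound hD hA v v (by simp) k)
    (eig_bound hD hA v v (by simp) j)

lemma second_deriv_formula (hD : D.IsHermitian) (hA : A.IsHermitian) (f : ℝ → ℝ)
    (hf : ContDiff ℝ 3 f) :
    iteratedDeriv 2 (fun u : ℝ => trFun f (D + (u : ℂ) • A)) 0 =
      ∑ j, ∑ i, hDD (deriv f) (hD.eigenvalues i) (hD.eigenvalues j) *
        ‖inner ℂ (hD.eigenvectorBasis i)
          (Matrix.toEuclideanCLM (𝕜 := ℂ) A (hD.eigenvectorBasis j))‖ ^ 2 := by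
  rw [iteratedDeriv_succ, iteratedDeriv_one]
  have h1 : deriv (fun u : ℝ => trFun f (D + (u : ℂ) • A)) = firstD hD hA f :=
    funext fun v => (trFun_hasDerivAt hD hA f (hf.of_le (by norm_num)) v).deriv
  rw [h1, (firstD_hasDerivAt hD hA f hf 0).deriv]
  have e : ∀ (M : Matrix N N ℂ) (hM : M.IsHermitian), M = D →
      (∑ j, ∑ i, hDD (deriv f) (hM.eigenvalues i) (hM.eigenvalues j) *
        ‖inner ℂ (hM.eigenvectorBasis i)
          (Matrix.toEuclideanCLM (𝕜 := ℂ) A (hM.eigenvectorBasis j))‖ ^ 2) =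
      ∑ j, ∑ i, hDD (deriv f) (hD.eigenvalues i) (hD.eigenvalues j) *
        ‖inner ℂ (hD.eigenvectorBasis i)
          (Matrix.toEuclideanCLM (𝕜 := ℂ) A (hD.eigenvectorBasis j))‖ ^ 2 := by
    rintro M hM rfl
    rfl
  exact e _ (herm_add hD hA 0) (by simp)

end main

/-- Second Gâteaux derivative of the spectral action `S(A) = Tr f(D+A)` at `0`:
`S''(0)(A,A) = 2 ∑_{i,j} A_{ij}A_{ji} f[λⱼ,λᵢ,λⱼ] = ∑_{i,j} |A_{ij}|² f'[λᵢ,λⱼ]`,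
where `λᵢ` are the eigenvalues of `D`, `A_{ij}` the matrix coefficients of `A`
in an orthonormal eigenbasis of `D`, and `f'[λᵢ,λⱼ]` the first divided
difference of `f'` (equal to `f''(λᵢ)` on coinciding points). -/
theorem spectral_action_second_derivative {N : Type*} [Fintype N] [DecidableEq N]
    (D A : Matrix N N ℂ) (hD : D.IsHermitian) (hA : A.IsHermitian)
    (f : ℝ → ℝ) (hf : ContDiff ℝ (⊤ : ℕ∞) f) :
    iteratedDeriv 2 (fun u : ℝ => trFun f (D + (u : ℂ) • A)) 0 =
        2 * ∑ i, ∑ j,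
          ((inner (𝕜 := ℂ) (hD.eigenvectorBasis i)
              (Matrix.toEuclideanCLM (𝕜 := ℂ) A (hD.eigenvectorBasis j))) *
            (inner (𝕜 := ℂ) (hD.eigenvectorBasis j)
              (Matrix.toEuclideanCLM (𝕜 := ℂ) A (hD.eigenvectorBasis i)))).re *
            divDiff f 2 ![hD.eigenvalues j, hD.eigenvalues i, hD.eigenvalues j] ∧
      iteratedDeriv 2 (fun u : ℝ => trFun f (D + (u : ℂ) • A)) 0 =
        ∑ i, ∑ j,
          ‖inner (𝕜 := ℂ) (hD.eigenvectorBasis i)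
              (Matrix.toEuclideanCLM (𝕜 := ℂ) A (hD.eigenvectorBasis j))‖ ^ 2 *
            (if hD.eigenvalues i = hD.eigenvalues j then
              iteratedDeriv 2 f (hD.eigenvalues i)
            else
              (deriv f (hD.eigenvalues i) - deriv f (hD.eigenvalues j)) /
                (hD.eigenvalues i - hD.eigenvalues j)) := by
  have hf3 : ContDiff ℝ 3 f := by exact_mod_cast contDiff_infty.1 hf 3
  have hf2 : ContDiff ℝ 2 f := by exact_mod_cast contDiff_infty.1 hf 2
  have hg : ContDiff ℝ 1 (deriv f) := by
    have : ContDiff ℝ (1 + 1) f := by simpa [one_add_one_eq_two] using hf2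
    exact (contDiff_succ_iff_deriv.1 this).2.2
  rw [second_deriv_formula hD hA f hf3]
  have hsymm : ∀ i j, inner ℂ (hD.eigenvectorBasis j)
      (Matrix.toEuclideanCLM (𝕜 := ℂ) A (hD.eigenvectorBasis i)) =
      (starRingEnd ℂ) (inner ℂ (hD.eigenvectorBasis i)
        (Matrix.toEuclideanCLM (𝕜 := ℂ) A (hD.eigenvectorBasis j))) := by
    intro i j
    rw [inner_conj_symm, herm_symm hA]
  constructor
  · have hre : ∀ i j, ((inner (𝕜 := ℂ) (hD.eigenvectorBasis i)
              (Matrix.toEuclideanCLM (𝕜 := ℂ) A (hD.eigenvectorBasis j))) *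
            (inner (𝕜 := ℂ) (hD.eigenvectorBasis j)
              (Matrix.toEuclideanCLM (𝕜 := ℂ) A (hD.eigenvectorBasis i)))).re =
        ‖inner ℂ (hD.eigenvectorBasis i)
          (Matrix.toEuclideanCLM (𝕜 := ℂ) A (hD.eigenvectorBasis j))‖ ^ 2 := by
      intro i j
      rw [hsymm i j, Complex.mul_conj', ← Complex.ofReal_pow, Complex.ofReal_re]
    simp_rw [hre]
    have hn : ∀ i j, ‖inner ℂ (hD.eigenvectorBasis j)
          (Matrix.toEuclideanCLM (𝕜 := ℂ) A (hD.eigenvectorBasis i))‖ =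
        ‖inner ℂ (hD.eigenvectorBasis i)
          (Matrix.toEuclideanCLM (𝕜 := ℂ) A (hD.eigenvectorBasis j))‖ := by
      intro i j
      rw [hsymm i j, Complex.norm_conj]
    simp_rw [← divDiff_add f hf2, add_mul, Finset.sum_add_distrib]
    rw [two_mul]
    congr 1
    · rw [Finset.sum_comm]
      simp_rw [mul_comm]
    · refine Finset.sum_congr rfl fun j _ => Finset.sum_congr rfl fun i _ => ?_
      rw [hn j i, mul_comm]
  · rw [Finset.sum_comm]
    refine Finset.sum_congr rfl fun i _ => Finset.sum_congr rfl fun j _ => ?_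
    rw [mul_comm]
    congr 1
    split_ifs with h
    · rw [h, hDD_self, iteratedDeriv_succ, iteratedDeriv_one]
    · rw [← hDD_mul hg, mul_div_cancel_right₀ _ (sub_ne_zero.2 h)]
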